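/- Let k ≥ 2 be an integer and define the polynomial W_k(z) = ((2π)^{2k−1} 2^{2k}/(2k)!) ∑_{j=0}^{k} (−1)^j B_{2j} B_{2k−2j} (1−2^{1−2j})(1−2^{1−2k+2j}) C(2k,2j) z^{2j}. Then every complex root of W_k lies on the unit circle (has absolute value 1), and all roots of W_k are simple. -/

import Mathlib

/-- The polynomial
`W_k(z) = ((2π)^{2k−1} 2^{2k}/(2k)!) ∑_{j=0}^{k} (−1)^j B_{2j} B_{2k−2j}
(1−2^{1−2j})(1−2^{1−2k+2j}) C(2k,2j) z^{2j}`, viewed as a polynomial over `ℂ`. -/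
noncomputable def Wpoly (k : ℕ) : Polynomial ℂ :=
  Polynomial.C ((((2 * Real.pi) ^ (2 * k - 1) * 2 ^ (2 * k) / (Nat.factorial (2 * k))) : ℝ) : ℂ) *
    ∑ j ∈ Finset.range (k + 1),
      Polynomial.C ((-1 : ℂ) ^ j * ((bernoulli (2 * j) : ℚ) : ℂ)
        * ((bernoulli (2 * k - 2 * j) : ℚ) : ℂ)
        * (1 - (2 : ℂ) ^ (1 - 2 * (j : ℤ))) * (1 - (2 : ℂ) ^ (1 - 2 * (k : ℤ) + 2 * j))
        * ((Nat.choose (2 * k) (2 * j)) : ℂ)) * Polynomial.X ^ (2 * j)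

lemma hs_congr {f g : ℕ → ℝ} {a b : ℝ} (h : HasSum f a) (hf : ∀ i, g i = f i) (hab : b = a) :
    HasSum g b := by
  rw [hab, funext hf]; exact h

noncomputable def ee (j : ℕ) : ℝ :=
  (-1) ^ (j + 1) * (2 * Real.pi) ^ (2 * j) / (2 * (Nat.factorial (2 * j))) * (bernoulli (2 * j) : ℝ)
    * (1 - (2 : ℝ) ^ (1 - 2 * (j : ℤ)))

lemma ee_zero : ee 0 = 1 / 2 := by
  simp [ee]; norm_num

lemma ee_hasSum (j : ℕ) (hj : 1 ≤ j) :
    HasSum (fun i : ℕ => (-1 : ℝ) ^ i * (1 / ((i : ℝ) + 1) ^ (2 * j))) (ee j) := by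
  have hz := hasSum_zeta_nat (k := j) (by omega)
  set Z : ℝ := (-1 : ℝ) ^ (j + 1) * 2 ^ (2 * j - 1) * Real.pi ^ (2 * j) *
    bernoulli (2 * j) / (Nat.factorial (2 * j)) with hZ
  have h0 : HasSum (fun n : ℕ => 1 / ((n : ℝ) + 1) ^ (2 * j)) Z := by
    have := (hasSum_nat_add_iff' 1).2 hz
    have h2 : 2 * j ≠ 0 := by omega
    simpa [h2] using this
  have h1 : HasSum (fun n : ℕ => if n % 2 = 1 then 1 / ((n : ℝ) + 1) ^ (2 * j) else 0)
      (Z / 2 ^ (2 * j)) := by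
    have hinj : Function.Injective (fun n : ℕ => 2 * n + 1) := fun a b h => by
      simp only at h; omega
    refine (hinj.hasSum_iff ?_).1 ?_
    · intro x hx
      rw [if_neg]
      intro h
      exact hx ⟨x / 2, by simp only; omega⟩
    · have h3 := h0.div_const (2 ^ (2 * j))
      refine hs_congr h3 (fun n => ?_) rfl
      have : (2 * n + 1) % 2 = 1 := by omega
      simp only [Function.comp, this, if_true]
      push_cast
      rw [div_div, ← mul_pow]
      congr 2
      ring
  have h2 := h0.sub (h1.mul_left 2)
  refine hs_congr h2 (fun i => ?_) ?_
  · rcases Nat.even_or_odd i with h | h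
    · have : i % 2 ≠ 1 := by have := Nat.even_iff.1 h; omega
      simp [h.neg_one_pow, this]
    · have : i % 2 = 1 := Nat.odd_iff.1 h
      simp only [h.neg_one_pow, this, if_true]
      ring
  · have e1 : (2 : ℝ) ^ (1 - 2 * (j : ℤ)) = 2 / 2 ^ (2 * j) := by
      rw [zpow_sub₀ (by norm_num)]
      norm_cast
    have e2 : (2 : ℝ) ^ (2 * j) = 2 * 2 ^ (2 * j - 1) := by
      rw [← pow_succ']; congr 1; omega
    rw [ee, e1, hZ, mul_pow, e2]
    have : (2 : ℝ) ^ (2 * j - 1) ≠ 0 := by positivity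
    have : ((Nat.factorial (2 * j) : ℕ) : ℝ) ≠ 0 := by positivity
    field_simp

lemma ee_anti (j : ℕ) : Antitone (fun i : ℕ => 1 / ((i : ℝ) + 1) ^ (2 * j)) := by
  intro a b hab
  simp only
  have : (a : ℝ) ≤ b := by exact_mod_cast hab
  gcongr

lemma ee_ge (j : ℕ) (hj : 1 ≤ j) : 3 / 4 ≤ ee j := by
  have h := (ee_anti j).alternating_series_le_tendsto (ee_hasSum j hj).tendsto_sum_nat 1
  simp [Finset.sum_range_succ] at h
  norm_num at h
  have h4 : (4 : ℝ) ≤ 2 ^ (2 * j) := by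
    calc (4 : ℝ) = 2 ^ 2 := by norm_num
      _ ≤ _ := by gcongr <;> first | omega | norm_num
  have : 1 / (2 : ℝ) ^ (2 * j) ≤ 1 / 4 := by gcongr
  rw [one_div] at this
  linarith

lemma ee_lt (j : ℕ) (hj : 1 ≤ j) : ee j < 1 := by
  have h := (ee_anti j).tendsto_le_alternating_series (ee_hasSum j hj).tendsto_sum_nat 1
  simp [Finset.sum_range_succ] at h
  norm_num at h
  have : ((3 : ℝ) ^ (2 * j))⁻¹ < (2 ^ (2 * j))⁻¹ := by
    gcongr <;> first | omega | norm_num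
  linarith

lemma ee_pos (j : ℕ) : 0 < ee j := by
  rcases Nat.eq_zero_or_pos j with rfl | h
  · rw [ee_zero]; norm_num
  · linarith [ee_ge j h]

lemma inv_sq_facts (b : ℕ) : (0 : ℝ) ≤ 1 / ((b : ℝ) + 2) ^ 2 ∧ 1 / ((b : ℝ) + 2) ^ 2 ≤ 1 / 4 := by
  refine ⟨by positivity, ?_⟩
  have : (0 : ℝ) ≤ b := by positivity
  apply one_div_le_one_div_of_le (by norm_num)
  nlinarith

lemma inv_sq_anti {a b : ℕ} (h : a ≤ b) :
    1 / ((b : ℝ) + 2) ^ 2 ≤ 1 / ((a : ℝ) + 2) ^ 2 := by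
  have : (a : ℝ) ≤ b := by exact_mod_cast h
  gcongr

lemma ee_step (j : ℕ) (hj : 1 ≤ j) : ee j ≤ ee (j + 1) := by
  have h := (ee_hasSum j hj).sub (ee_hasSum (j + 1) (by omega))
  have h' := ((hasSum_nat_add_iff' 1).2 h).neg
  have hs : HasSum (fun i : ℕ => (-1 : ℝ) ^ i *
      ((1 / ((i : ℝ) + 2) ^ 2) ^ j * (1 - 1 / ((i : ℝ) + 2) ^ 2))) (ee (j + 1) - ee j) := by
    refine hs_congr h' (fun i => ?_) ?_
    · push_cast
      have : (i : ℝ) + 1 + 1 = i + 2 := by ring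
      rw [this, pow_succ (-1 : ℝ)]
      have hh : ∀ m : ℕ, 1 / ((i : ℝ) + 2) ^ (2 * m) = (1 / ((i : ℝ) + 2) ^ 2) ^ m := by
        intro m; rw [one_div_pow, pow_mul]
      simp only [hh]
      generalize 1 / ((i : ℝ) + 2) ^ 2 = u
      ring
    · simp
  have hanti : Antitone (fun i : ℕ => (1 / ((i : ℝ) + 2) ^ 2) ^ j * (1 - 1 / ((i : ℝ) + 2) ^ 2)) := by
    intro a b hab
    simp only
    obtain ⟨h1, h2⟩ := inv_sq_facts a
    obtain ⟨h3, h4⟩ := inv_sq_facts b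
    have h5 := inv_sq_anti hab
    generalize 1 / ((a : ℝ) + 2) ^ 2 = u at *
    generalize 1 / ((b : ℝ) + 2) ^ 2 = v at *
    obtain ⟨m, rfl⟩ : ∃ m, j = m + 1 := ⟨j - 1, by omega⟩
    rw [pow_succ, pow_succ, mul_assoc, mul_assoc]
    have : v ^ m ≤ u ^ m := by gcongr
    apply mul_le_mul this _ (by nlinarith) (by positivity)
    nlinarith
  have := hanti.alternating_series_le_tendsto hs.tendsto_sum_nat 0
  simp at this
  exact this

lemma ee_conc (j : ℕ) (hj : 1 ≤ j) : ee j + ee (j + 2) ≤ 2 * ee (j + 1) := by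
  have h := ((ee_hasSum j hj).add (ee_hasSum (j + 2) (by omega))).sub
    ((ee_hasSum (j + 1) (by omega)).mul_left 2)
  have h' := ((hasSum_nat_add_iff' 1).2 h).neg
  have hs : HasSum (fun i : ℕ => (-1 : ℝ) ^ i *
      ((1 / ((i : ℝ) + 2) ^ 2) ^ j * (1 - 1 / ((i : ℝ) + 2) ^ 2) ^ 2))
      (2 * ee (j + 1) - (ee j + ee (j + 2))) := by
    refine hs_congr h' (fun i => ?_) ?_
    · push_cast
      have : (i : ℝ) + 1 + 1 = i + 2 := by ring
      rw [this, pow_succ (-1 : ℝ)]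
      have hh : ∀ m : ℕ, 1 / ((i : ℝ) + 2) ^ (2 * m) = (1 / ((i : ℝ) + 2) ^ 2) ^ m := by
        intro m; rw [one_div_pow, pow_mul]
      simp only [hh]
      generalize 1 / ((i : ℝ) + 2) ^ 2 = u
      ring
    · simp; ring
  have hanti : Antitone (fun i : ℕ =>
      (1 / ((i : ℝ) + 2) ^ 2) ^ j * (1 - 1 / ((i : ℝ) + 2) ^ 2) ^ 2) := by
    intro a b hab
    simp only
    obtain ⟨h1, h2⟩ := inv_sq_facts a
    obtain ⟨h3, h4⟩ := inv_sq_facts b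
    have h5 := inv_sq_anti hab
    generalize 1 / ((a : ℝ) + 2) ^ 2 = u at *
    generalize 1 / ((b : ℝ) + 2) ^ 2 = v at *
    obtain ⟨m, rfl⟩ : ∃ m, j = m + 1 := ⟨j - 1, by omega⟩
    rw [pow_succ v, pow_succ u, mul_assoc, mul_assoc]
    have : v ^ m ≤ u ^ m := by gcongr
    apply mul_le_mul this _ (by positivity) (by positivity)
    have key : 0 ≤ (u - v) * (1 - 2 * (u + v) + (u ^ 2 + u * v + v ^ 2)) := by
      apply mul_nonneg (by linarith)
      have : 0 ≤ u * v := by positivity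
      nlinarith [sq_nonneg u, sq_nonneg v]
    nlinarith [key]
  have := hanti.alternating_series_le_tendsto hs.tendsto_sum_nat 0
  simp at this
  linarith

lemma ee_mono : Monotone ee := by
  apply monotone_nat_of_le_succ
  intro n
  rcases Nat.eq_zero_or_pos n with rfl | h
  · rw [ee_zero]; linarith [ee_ge 1 le_rfl]
  · exact ee_step n h

lemma dd_anti : Antitone (fun j => ee (j + 1) - ee j) := by
  apply antitone_nat_of_succ_le
  intro n
  rcases Nat.eq_zero_or_pos n with rfl | h
  · have := ee_ge 1 le_rfl
    have := ee_lt 2 (by norm_num)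
    simp [ee_zero]
    linarith
  · have := ee_conc n h
    simp only [add_assoc]
    norm_num
    linarith

noncomputable def aa (k j : ℕ) : ℝ := ee j * ee (k - j)

lemma aa_symm (k j : ℕ) (h : j ≤ k) : aa k (k - j) = aa k j := by
  rw [aa, aa, Nat.sub_sub_self h, mul_comm]

lemma aa_up (k j : ℕ) (h : 2 * j + 1 ≤ k) : aa k j ≤ aa k (j + 1) := by
  obtain ⟨l, rfl⟩ : ∃ l, k = j + l + 1 := ⟨k - j - 1, by omega⟩
  have hjl : j ≤ l := by omega
  rw [aa, aa, show j + l + 1 - j = l + 1 by omega, show j + l + 1 - (j + 1) = l by omega]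
  have h1 := dd_anti hjl
  have h2 := ee_mono hjl
  have h3 := ee_mono (Nat.le_succ l)
  have h4 := ee_pos j
  simp only [Nat.succ_eq_add_one] at *
  nlinarith [mul_le_mul h2 h1 (by linarith) (ee_pos l).le]

lemma aa_down (k j : ℕ) (h : k ≤ 2 * j + 1) (hj : j < k) : aa k (j + 1) ≤ aa k j := by
  have := aa_up k (k - (j + 1)) (by omega)
  rw [aa_symm k (j + 1) (by omega), show k - (j + 1) + 1 = k - j by omega,
    aa_symm k j hj.le] at this
  exact this

lemma aa_var (k : ℕ) (hk : 2 ≤ k) :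
    ∑ j ∈ Finset.range k, |aa k (j + 1) - aa k j| < 2 * aa k 0 := by
  have hm : k / 2 ≤ k := by omega
  rw [← Finset.sum_range_add_sum_Ico _ hm]
  have h1 : ∑ j ∈ Finset.range (k / 2), |aa k (j + 1) - aa k j| = aa k (k / 2) - aa k 0 := by
    rw [← Finset.sum_range_sub]
    apply Finset.sum_congr rfl
    intro j hj
    rw [Finset.mem_range] at hj
    exact abs_of_nonneg (sub_nonneg.2 (aa_up k j (by omega)))
  have h2 : ∑ j ∈ Finset.Ico (k / 2) k, |aa k (j + 1) - aa k j| = aa k (k / 2) - aa k k := by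
    rw [← neg_sub, ← Finset.sum_Ico_sub _ hm, ← Finset.sum_neg_distrib]
    apply Finset.sum_congr rfl
    intro j hj
    rw [Finset.mem_Ico] at hj
    exact abs_of_nonpos (sub_nonpos.2 (aa_down k j (by omega) hj.2))
  have h3 := aa_symm k 0 (by omega)
  rw [Nat.sub_zero] at h3
  rw [h1, h2, h3]
  have h4 : 2 * aa k 0 = ee k := by rw [aa, ee_zero, Nat.sub_zero]; ring
  have h5 : aa k (k / 2) < ee k := by
    rw [aa]
    have e1 := ee_lt (k / 2) (by omega)
    have e2 := ee_mono (show k - k / 2 ≤ k by omega)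
    have e3 := ee_pos (k - k / 2)
    nlinarith
  linarith

noncomputable def SS (k : ℕ) (t : ℝ) : ℝ :=
  Real.sin t * ∑ j ∈ Finset.range (k + 1), aa k j * Real.cos ((2 * j - k) * t)

lemma SS_eq (k : ℕ) (t : ℝ) : 2 * SS k t = 2 * aa k 0 * Real.sin ((k + 1) * t)
    - ∑ j ∈ Finset.range k, (aa k (j + 1) - aa k j) * Real.sin ((2 * j + 1 - k) * t) := by
  have h3 := aa_symm k 0 (by omega)
  rw [Nat.sub_zero] at h3
  have abel : ∀ (a s : ℕ → ℝ) (n : ℕ), ∑ j ∈ Finset.range (n + 1), a j * (s (j + 1) - s j)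
      = a n * s (n + 1) - a 0 * s 0 - ∑ j ∈ Finset.range n, (a (j + 1) - a j) * s (j + 1) := by
    intro a s n
    induction n with
    | zero => simp; ring
    | succ n ih => rw [Finset.sum_range_succ, ih, Finset.sum_range_succ]; ring
  have h := abel (aa k) (fun j => Real.sin ((2 * j - k - 1) * t)) k
  have e : 2 * SS k t = ∑ j ∈ Finset.range (k + 1), aa k j *
      (Real.sin ((2 * (j + 1 : ℕ) - k - 1) * t) - Real.sin ((2 * j - k - 1) * t)) := by
    rw [SS, Finset.mul_sum, Finset.mul_sum]
    apply Finset.sum_congr rfl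
    intro j _
    have q1 : ((2 * (j + 1 : ℕ) - k - 1) * t : ℝ) = (2 * j - k) * t + t := by push_cast; ring
    have q2 : ((2 * j - k - 1) * t : ℝ) = (2 * j - k) * t - t := by ring
    rw [q1, q2, Real.sin_add, Real.sin_sub]; ring
  rw [e, h, h3]
  have q1 : ((2 * (k + 1 : ℕ) - k - 1) * t : ℝ) = (k + 1) * t := by push_cast; ring
  have q2 : ((2 * (0 : ℕ) - k - 1) * t : ℝ) = -((k + 1) * t) := by push_cast; ring
  rw [q1, q2, Real.sin_neg]
  have : ∀ j : ℕ, ((2 * (j + 1 : ℕ) - k - 1) * t : ℝ) = (2 * j + 1 - k) * t := by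
    intro j; push_cast; ring
  simp only [this]
  ring

lemma SS_sign (k : ℕ) (hk : 2 ≤ k) (m : ℕ) :
    0 < (-1) ^ m * SS k ((m + 1 / 2) * Real.pi / (k + 1)) := by
  set t : ℝ := (m + 1 / 2) * Real.pi / (k + 1) with ht
  have hs : Real.sin ((k + 1) * t) = (-1) ^ m := by
    have : ((k : ℝ) + 1) * t = Real.pi / 2 + m * Real.pi := by
      have : (k : ℝ) + 1 ≠ 0 := by positivity
      rw [ht]; field_simp; ring
    rw [this, Real.sin_add_nat_mul_pi, Real.sin_pi_div_two, mul_one]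
  have h := SS_eq k t
  rw [hs] at h
  have hv := aa_var k hk
  have hb : |∑ j ∈ Finset.range k, (aa k (j + 1) - aa k j) * Real.sin ((2 * j + 1 - k) * t)|
      ≤ ∑ j ∈ Finset.range k, |aa k (j + 1) - aa k j| := by
    refine (Finset.abs_sum_le_sum_abs _ _).trans (Finset.sum_le_sum fun j _ => ?_)
    rw [abs_mul]
    exact mul_le_of_le_one_right (abs_nonneg _) (Real.abs_sin_le_one _)
  have hb' := abs_le.1 hb
  rcases neg_one_pow_eq_or ℝ m with h1 | h1 <;> rw [h1] at h ⊢ <;> linarith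

lemma SS_root (k : ℕ) (hk : 2 ≤ k) (m : ℕ) :
    ∃ t : ℝ, (m + 1 / 2) * Real.pi / (k + 1) < t ∧
      t < ((m + 1 : ℕ) + 1 / 2) * Real.pi / (k + 1) ∧ SS k t = 0 := by
  have h1 := SS_sign k hk m
  have h2 := SS_sign k hk (m + 1)
  have hlt : (m + 1 / 2) * Real.pi / (k + 1) < ((m + 1 : ℕ) + 1 / 2) * Real.pi / (k + 1) := by
    have := Real.pi_pos
    gcongr
    simp
  have hc : Continuous (fun t => (-1) ^ m * SS k t) := by
    unfold SS; fun_prop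
  have := intermediate_value_Ioo' hlt.le hc.continuousOn
  rw [pow_succ] at h2
  obtain ⟨t, ⟨ht1, ht2⟩, h3⟩ := this (show (0 : ℝ) ∈ _ from ⟨by linarith, h1⟩)
  refine ⟨t, ht1, ht2, ?_⟩
  simpa using h3

noncomputable def cc (k : ℕ) : ℂ := (Real.pi : ℂ)⁻¹ * 2 * 2 ^ (2 * k) * (-1) ^ k

lemma bern_eq (j : ℕ) : ((bernoulli (2 * j) : ℚ) : ℂ) * (1 - (2 : ℂ) ^ (1 - 2 * (j : ℤ)))
    = (-1) ^ (j + 1) * (2 * (Nat.factorial (2 * j))) / (2 * (Real.pi : ℂ)) ^ (2 * j) * (ee j : ℂ) := by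
  have hp : (Real.pi : ℂ) ≠ 0 := by exact_mod_cast Real.pi_ne_zero
  have hf : ((Nat.factorial (2 * j) : ℕ) : ℂ) ≠ 0 := by exact_mod_cast (Nat.factorial_ne_zero _)
  have hs : ((-1 : ℂ) ^ (j + 1)) * (-1) ^ (j + 1) = 1 := by
    rw [← mul_pow]; simp
  rw [ee]
  push_cast
  have hq : (2 * (Real.pi : ℂ)) ^ (2 * j) ≠ 0 := by
    apply pow_ne_zero; exact mul_ne_zero two_ne_zero hp
  generalize (2 * (Real.pi : ℂ)) ^ (2 * j) = P at *
  generalize ((-1 : ℂ) ^ (j + 1)) = s at *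
  field_simp
  linear_combination (-(((bernoulli (2 * j) : ℚ) : ℂ) * (1 - (2 : ℂ) ^ (1 - 2 * (j : ℤ))))) * hs

lemma W_eval (k : ℕ) (hk : 2 ≤ k) (z : ℂ) :
    (Wpoly k).eval z = cc k * ∑ j ∈ Finset.range (k + 1), (aa k j : ℂ) * (-z ^ 2) ^ j := by
  rw [Wpoly, Polynomial.eval_mul, Polynomial.eval_C, Polynomial.eval_finsetSum, Finset.mul_sum,
    Finset.mul_sum]
  apply Finset.sum_congr rfl
  intro j hj
  rw [Finset.mem_range] at hj
  obtain ⟨l, rfl⟩ : ∃ l, k = j + l := ⟨k - j, by omega⟩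
  simp only [Polynomial.eval_mul, Polynomial.eval_C, Polynomial.eval_pow, Polynomial.eval_X]
  have h1 := bern_eq j
  have h2 := bern_eq l
  have e1 : (1 - 2 * ((j + l : ℕ) : ℤ) + 2 * (j : ℤ)) = 1 - 2 * (l : ℤ) := by push_cast; ring
  have e2 : 2 * (j + l) - 2 * j = 2 * l := by omega
  rw [e1, e2]
  have hp : (Real.pi : ℂ) ≠ 0 := by exact_mod_cast Real.pi_ne_zero
  have hch : ((Nat.choose (2 * (j + l)) (2 * j) : ℕ) : ℂ) =
      (Nat.factorial (2 * (j + l)) : ℂ) / ((Nat.factorial (2 * j)) * (Nat.factorial (2 * l))) := by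
    rw [Nat.cast_choose ℂ (by omega), e2]
  have hf1 : ((Nat.factorial (2 * j) : ℕ) : ℂ) ≠ 0 := by exact_mod_cast (Nat.factorial_ne_zero _)
  have hf2 : ((Nat.factorial (2 * l) : ℕ) : ℂ) ≠ 0 := by exact_mod_cast (Nat.factorial_ne_zero _)
  have hf3 : ((Nat.factorial (2 * (j + l)) : ℕ) : ℂ) ≠ 0 := by
    exact_mod_cast (Nat.factorial_ne_zero _)
  rw [hch, aa, show j + l - j = l by omega]
  have hpw : (2 * (Real.pi : ℂ)) ^ (2 * (j + l) - 1) =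
      (2 * (Real.pi : ℂ)) ^ (2 * j) * (2 * (Real.pi : ℂ)) ^ (2 * l) / (2 * Real.pi) := by
    rw [eq_div_iff (mul_ne_zero two_ne_zero hp), ← pow_succ, ← pow_add]
    congr 1; omega
  push_cast
  rw [hpw]
  have hP1 : (2 * (Real.pi : ℂ)) ^ (2 * j) ≠ 0 := by
    apply pow_ne_zero; exact mul_ne_zero two_ne_zero hp
  have hP2 : (2 * (Real.pi : ℂ)) ^ (2 * l) ≠ 0 := by
    apply pow_ne_zero; exact mul_ne_zero two_ne_zero hp
  have hz : (-z ^ 2) ^ j = (-1) ^ j * z ^ (2 * j) := by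
    rw [neg_pow, pow_mul]
  rw [hz, cc]
  set B1 := ((bernoulli (2 * j) : ℚ) : ℂ)
  set B2 := ((bernoulli (2 * l) : ℚ) : ℂ)
  set u1 := (1 - (2 : ℂ) ^ (1 - 2 * (j : ℤ)))
  set u2 := (1 - (2 : ℂ) ^ (1 - 2 * (l : ℤ)))
  generalize (2 * (Real.pi : ℂ)) ^ (2 * j) = P at *
  generalize (2 * (Real.pi : ℂ)) ^ (2 * l) = Q at *
  generalize ((Nat.factorial (2 * j) : ℕ) : ℂ) = f1 at *
  generalize ((Nat.factorial (2 * l) : ℕ) : ℂ) = f2 at *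
  generalize ((Nat.factorial (2 * (j + l)) : ℕ) : ℂ) = f3 at *
  have : (-1 : ℂ) ^ j * B1 * B2 * u1 * u2 = (-1) ^ j * ((B1 * u1) * (B2 * u2)) := by ring
  rw [this, h1, h2]
  field_simp
  ring

lemma V_circle (k : ℕ) (hk : 2 ≤ k) (t : ℝ) :
    ((Polynomial.X ^ 2 + 1) * Wpoly k).eval (Complex.I * Complex.exp (t * Complex.I)) =
      -(cc k) * (2 * Complex.I * Complex.exp ((k + 1) * t * Complex.I)) * (SS k t : ℂ) := by
  have hx : -(Complex.I * Complex.exp (t * Complex.I)) ^ 2 = Complex.exp (2 * t * Complex.I) := by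
    rw [mul_pow, Complex.I_sq, ← Complex.exp_nat_mul]
    push_cast
    rw [neg_one_mul, neg_neg]; congr 1; ring
  rw [Polynomial.eval_mul, W_eval k hk, hx]
  have hx' : Polynomial.eval (Complex.I * Complex.exp (t * Complex.I))
      (Polynomial.X ^ 2 + 1 : Polynomial ℂ) = 1 - Complex.exp (2 * t * Complex.I) := by
    rw [← hx]; simp; ring
  rw [hx']
  have hsum : ∑ j ∈ Finset.range (k + 1), (aa k j : ℂ) * Complex.exp (2 * t * Complex.I) ^ j =
      Complex.exp (k * t * Complex.I) *
        ∑ j ∈ Finset.range (k + 1), (aa k j : ℂ) * Complex.cos ((2 * j - k) * t) := by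
    have e1 : ∀ j : ℕ, (aa k j : ℂ) * Complex.exp (2 * t * Complex.I) ^ j =
        Complex.exp (k * t * Complex.I) * ((aa k j : ℂ) * Complex.exp ((2 * j - k) * t * Complex.I)) := by
      intro j
      rw [mul_left_comm, ← Complex.exp_add, ← Complex.exp_nat_mul]
      congr 2; ring
    simp only [e1]
    rw [← Finset.mul_sum]
    congr 1
    simp only [Complex.exp_mul_I, mul_add, Finset.sum_add_distrib]
    rw [add_eq_left]
    have : ∑ j ∈ Finset.range (k + 1), (aa k j : ℂ) * (Complex.sin ((2 * j - k) * t) * Complex.I) =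
       -∑ j ∈ Finset.range (k + 1), (aa k j : ℂ) * (Complex.sin ((2 * j - k) * t) * Complex.I) := by
      conv_lhs => rw [← Finset.sum_range_reflect]
      rw [← Finset.sum_neg_distrib]
      apply Finset.sum_congr rfl
      intro j hj
      rw [Finset.mem_range] at hj
      rw [show k + 1 - 1 - j = k - j by omega, aa_symm k j (by omega), Nat.cast_sub (by omega)]
      rw [show (2 * ((k : ℂ) - j) - k) * t = -((2 * j - k) * t) by ring, Complex.sin_neg]
      ring
    exact self_eq_neg.1 this
  rw [hsum, SS]
  push_cast
  have hsin : 1 - Complex.exp (2 * t * Complex.I) =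
      -(2 * Complex.I * Complex.exp (t * Complex.I) * Complex.sin t) := by
    have h2 : Complex.exp (2 * t * Complex.I) = Complex.exp (t * Complex.I) ^ 2 := by
      rw [← Complex.exp_nat_mul]; congr 1; push_cast; ring
    rw [h2, Complex.exp_mul_I]
    linear_combination (-Complex.sin t ^ 2) * Complex.I_sq - Complex.sin_sq_add_cos_sq (t : ℂ) + 2 * Complex.sin t ^ 2 * Complex.I_sq 
  have hexp : Complex.exp ((k + 1) * t * Complex.I) =
      Complex.exp (k * t * Complex.I) * Complex.exp (t * Complex.I) := by
    rw [← Complex.exp_add]; congr 1; ring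
  rw [hsin, hexp]
  ring

lemma W_deg (k : ℕ) : (Wpoly k).natDegree ≤ 2 * k := by
  rw [Wpoly]
  refine (Polynomial.natDegree_C_mul_le _ _).trans ?_
  apply Polynomial.natDegree_sum_le_of_forall_le
  intro j hj
  rw [Finset.mem_range] at hj
  refine (Polynomial.natDegree_C_mul_X_pow_le _ _).trans (by omega)

/-- Every complex root of `W_k` lies on the unit circle, and all roots are simple. -/
theorem Wpoly_roots_on_unit_circle_and_simple (k : ℕ) (hk : 2 ≤ k) :
    ∀ z : ℂ, (Wpoly k).IsRoot z →
      ‖z‖ = 1 ∧ Polynomial.rootMultiplicity z (Wpoly k) = 1 := by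
  intro z hz
  set V : Polynomial ℂ := (Polynomial.X ^ 2 + 1) * Wpoly k with hV
  have hpi := Real.pi_pos
  have hccne : cc k ≠ 0 := by
    have hp : (Real.pi : ℂ) ≠ 0 := by exact_mod_cast Real.pi_ne_zero
    simp [cc, hp]
  have hV0 : V ≠ 0 := by
    intro h
    have h1 := SS_sign k hk 0
    have h2 := V_circle k hk (((0 : ℕ) + 1 / 2) * Real.pi / (k + 1))
    rw [← hV, h, Polynomial.eval_zero] at h2
    have h3 : SS k (((0 : ℕ) + 1 / 2) * Real.pi / (k + 1)) ≠ 0 := by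
      intro h4; rw [h4] at h1; simp at h1
    have h4 : ((SS k (((0 : ℕ) + 1 / 2) * Real.pi / (k + 1)) : ℝ) : ℂ) ≠ 0 := by exact_mod_cast h3
    exact (mul_ne_zero (mul_ne_zero (neg_ne_zero.2 hccne) (mul_ne_zero
      (mul_ne_zero two_ne_zero Complex.I_ne_zero) (Complex.exp_ne_zero _))) h4) h2.symm
  have hVdeg : V.natDegree ≤ 2 * k + 2 := by
    refine Polynomial.natDegree_mul_le.trans ?_
    have : (Polynomial.X ^ 2 + 1 : Polynomial ℂ).natDegree ≤ 2 := by compute_degree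
    have := W_deg k
    omega
  choose t ht1 ht2 ht3 using SS_root k hk
  have htm : StrictMono t := by
    apply strictMono_nat_of_lt_succ
    intro n
    exact (ht2 n).trans (ht1 (n + 1))
  let w : ℕ → ℂ := fun m => Complex.I * Complex.exp (t m * Complex.I)
  have hwinj : Set.InjOn w (Finset.range (2 * k + 2) : Finset ℕ) := by
    have key : ∀ a b : ℕ, a < b → b < 2 * k + 2 → w a ≠ w b := by
      intro a b hab hb h
      have h1 := mul_left_cancel₀ Complex.I_ne_zero h
      obtain ⟨n, hn⟩ := Complex.exp_eq_exp_iff_exists_int.1 h1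
      have h2 : t a = t b + n * (2 * Real.pi) := by
        have := congrArg Complex.im hn
        simpa using this
      have h3 := htm hab
      have h4 : (0 : ℝ) < -n := by
        by_contra hc
        push Not at hc
        nlinarith
      have h5 : (1 : ℝ) ≤ -n := by exact_mod_cast h4
      have h6 := ht1 a
      have h7 := ht2 b
      have hb' : ((b + 1 : ℕ) : ℝ) ≤ 2 * k + 2 := by exact_mod_cast hb
      have ha' : (0 : ℝ) ≤ a := by positivity
      have hk1 : (0 : ℝ) < (k : ℝ) + 1 := by positivity
      rw [div_lt_iff₀ hk1] at h6
      rw [lt_div_iff₀ hk1] at h7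
      have h8 : 2 * Real.pi ≤ t b - t a := by nlinarith
      have h9 : 2 * Real.pi * (k + 1) ≤ (t b - t a) * (k + 1) := by gcongr
      have h10 : ((b + 1 : ℕ) : ℝ) * Real.pi ≤ (2 * k + 2) * Real.pi := by gcongr
      have h11 : 0 ≤ a * Real.pi := by positivity
      nlinarith
    intro a ha b hb h
    simp only [Finset.coe_range, Set.mem_Iio] at ha hb
    rcases lt_trichotomy a b with hl | hl | hl
    · exact absurd h (key a b hl hb)
    · exact hl
    · exact absurd h.symm (key b a hl ha)
  let T : Finset ℂ := (Finset.range (2 * k + 2)).image w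
  have hTcard : T.card = 2 * k + 2 := by
    rw [Finset.card_image_of_injOn hwinj, Finset.card_range]
  have hTroots : T ⊆ V.roots.toFinset := by
    intro x hx
    obtain ⟨m, -, rfl⟩ := Finset.mem_image.1 hx
    rw [Multiset.mem_toFinset, Polynomial.mem_roots hV0, Polynomial.IsRoot, hV, V_circle k hk,
      ht3 m]
    simp
  have hc1 := Finset.card_le_card hTroots
  have hc2 := Multiset.toFinset_card_le V.roots
  have hc3 := Polynomial.card_roots' V
  have hnodup : V.roots.Nodup := Multiset.toFinset_card_eq_card_iff_nodup.1 (by omega)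
  have hTeq : T = V.roots.toFinset := Finset.eq_of_subset_of_card_le hTroots (by omega)
  have hdvd : Wpoly k ∣ V := Dvd.intro_left _ rfl
  have hzV : z ∈ V.roots := (Polynomial.mem_roots hV0).2 (hz.dvd hdvd)
  have hW0 : Wpoly k ≠ 0 := by
    intro h; apply hV0; rw [hV, h, mul_zero]
  constructor
  · have : z ∈ T := by rw [hTeq]; exact Multiset.mem_toFinset.2 hzV
    obtain ⟨m, -, rfl⟩ := Finset.mem_image.1 this
    simp [w, Complex.norm_exp_ofReal_mul_I]
  · apply le_antisymm
    · refine (Polynomial.rootMultiplicity_le_rootMultiplicity_of_dvd hV0 hdvd z).trans ?_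
      rw [← Polynomial.count_roots]
      exact Multiset.nodup_iff_count_le_one.1 hnodup z
    · exact (Polynomial.rootMultiplicity_pos hW0).2 hz
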